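/- Let n ≥ 2, 1 < p < n, 1 ≤ q ≤ ∞, let 0 ≤ l ≤ p, and set p*(l) = p(n-l)/(n-p). Then there exists a constant C > 0 such that for every smooth compactly supported f : ℝⁿ → ℝ, ‖ |x|^{-l/p*(l)} f ‖_{p*(l), q} ≤ C ‖ |∇f| ‖_{p,q}, where |x|^{-l/p*(l)} f denotes the function x ↦ |x|^{-l/p*(l)} f(x). -/

import Mathlib

open MeasureTheory Set ENNReal

/-- The distribution function `μ_f(λ) = μ{x : |f x| > λ}` of a function. -/
noncomputable def distribFn {α : Type*} [MeasurableSpace α] (μ : Measure α)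
    (f : α → ℝ) (l : ℝ≥0∞) : ℝ≥0∞ :=
  μ {x | l < ENNReal.ofReal |f x|}

/-- The decreasing rearrangement `f*(t) = inf {λ > 0 : μ_f(λ) ≤ t}`. -/
noncomputable def rearr {α : Type*} [MeasurableSpace α] (μ : Measure α)
    (f : α → ℝ) (t : ℝ) : ℝ≥0∞ :=
  sInf {l : ℝ≥0∞ | 0 < l ∧ distribFn μ f l ≤ ENNReal.ofReal t}

/-- The Lorentz `L^{p,q}` (quasi)norm
`‖f‖_{p,q} = (∫₀^∞ (t^{1/p} f*(t))^q dt/t)^{1/q}` for `q < ∞`, and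
`‖f‖_{p,∞} = sup_{t>0} t^{1/p} f*(t)`. -/
noncomputable def lorentz {α : Type*} [MeasurableSpace α] (μ : Measure α)
    (p q : ℝ≥0∞) (f : α → ℝ) : ℝ≥0∞ :=
  if q = ∞ then ⨆ t ∈ Ioi (0 : ℝ), ENNReal.ofReal t ^ p.toReal⁻¹ * rearr μ f t
  else (∫⁻ t in Ioi (0 : ℝ),
      (ENNReal.ofReal t ^ p.toReal⁻¹ * rearr μ f t) ^ q.toReal / ENNReal.ofReal t) ^ q.toReal⁻¹

/-!
Applying the `L¹` Sobolev inequality to truncations of `f` between the heights `f*(2t)` and `f*(t)`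
gives `f*(t) ≤ f*(2t) + C t^{1/n} |∇f|**(2t)`. Since `f*` vanishes eventually, iterating this bounds
`f*` by a series of dilates of `t^{1/n} |∇f|**(t)`, and `g**` is in turn bounded by a series of
dilates of `g*`. Dilation by `m` multiplies the norm of `t^a F(t)` in `L^q(dt/t)` by `m^{-a}`, so
both series converge geometrically exactly when `1 < p < n`: this is the Lorentz–Sobolev inequality,
`‖f‖_{r,q} ≤ C ‖|∇f|‖_{p,q}` with `1/r = 1/p - 1/n`. The weight `|x|^{-s}` lies in `L^{n/s,∞}`, and
`1/p*(l) = s/n + 1/r` for `s = l/p*(l)`, so Hölder's inequality for Lorentz spaces brings it in.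
-/

open scoped NNReal Topology

section Rearrangement

variable {α : Type*} [MeasurableSpace α] {μ : Measure α} {f g : α → ℝ} {s t : ℝ} {a : ℝ≥0∞}

lemma distribFn_antitone : Antitone (distribFn μ f) := fun _ _ hab =>
  measure_mono fun _ hx => lt_of_le_of_lt hab hx

lemma distribFn_le_of_rearr_lt (h : rearr μ f t < a) : distribFn μ f a ≤ ENNReal.ofReal t := by
  obtain ⟨b, ⟨-, hb⟩, hba⟩ := sInf_lt_iff.1 h
  exact (distribFn_antitone hba.le).trans hb

lemma distribFn_rearr_le : distribFn μ f (rearr μ f t) ≤ ENNReal.ofReal t := by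
  rcases eq_or_ne (rearr μ f t) ∞ with htop | htop
  · simp [htop, distribFn]
  obtain ⟨u, hu_anti, hu_mem, hu_lim⟩ := exists_seq_strictAnti_tendsto' htop.lt_top
  have hunion : {x | rearr μ f t < ENNReal.ofReal |f x|} =
      ⋃ k, {x | u k < ENNReal.ofReal |f x|} := by
    ext x
    simp only [mem_ofPred_eq, mem_iUnion]
    exact ⟨fun hx => (hu_lim.eventually_lt_const hx).exists,
      fun ⟨k, hk⟩ => (hu_mem k).1.trans hk⟩
  have hmono : Monotone fun k => {x | u k < ENNReal.ofReal |f x|} := fun _ _ hij _ hx =>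
    (hu_anti.antitone hij).trans_lt hx
  rw [distribFn, hunion, hmono.measure_iUnion]
  exact iSup_le fun k => distribFn_le_of_rearr_lt (hu_mem k).1

-- The Galois connection between `f*` and `μ_f` encodes the right continuity of `μ_f`.
lemma rearr_le_iff : rearr μ f t ≤ a ↔ distribFn μ f a ≤ ENNReal.ofReal t :=
  ⟨fun h => (distribFn_antitone h).trans distribFn_rearr_le, fun h =>
    le_of_forall_gt_imp_ge_of_dense fun _ hb =>
      sInf_le ⟨bot_le.trans_lt hb, (distribFn_antitone hb.le).trans h⟩⟩

lemma lt_rearr_iff : a < rearr μ f t ↔ ENNReal.ofReal t < distribFn μ f a :=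
  lt_iff_lt_of_le_iff_le rearr_le_iff

lemma rearr_antitone : Antitone (rearr μ f) := fun _ _ hst =>
  rearr_le_iff.2 (distribFn_rearr_le.trans (ENNReal.ofReal_le_ofReal hst))

lemma rearr_eq_zero_of_measure_support_le (h : μ (Function.support f) ≤ ENNReal.ofReal t) :
    rearr μ f t = 0 := by
  rw [← nonpos_iff_eq_zero, rearr_le_iff]
  refine (measure_mono fun x hx => ?_).trans h
  simpa using hx

lemma eventually_rearr_eq_zero_of_hasCompactSupport [TopologicalSpace α]
    [IsFiniteMeasureOnCompacts μ] (hf : HasCompactSupport f) :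
    ∀ᶠ t in Filter.atTop, rearr μ f t = 0 :=
  (ENNReal.tendsto_ofReal_atTop.eventually_const_lt hf.isCompact.measure_lt_top).mono fun _ ht =>
    rearr_eq_zero_of_measure_support_le ((measure_mono (subset_tsupport f)).trans ht.le)

lemma rearr_mul_le (hs : 0 ≤ s) (ht : 0 ≤ t) :
    rearr μ (fun x => f x * g x) (s + t) ≤ rearr μ f s * rearr μ g t := by
  rw [rearr_le_iff, ENNReal.ofReal_add hs ht]
  calc distribFn μ (fun x => f x * g x) (rearr μ f s * rearr μ g t)
      ≤ μ ({x | rearr μ f s < ENNReal.ofReal |f x|} ∪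
          {x | rearr μ g t < ENNReal.ofReal |g x|}) := measure_mono fun x hx => by
        contrapose! hx
        simp only [mem_union, mem_ofPred_eq, not_or, not_lt] at hx ⊢
        rw [abs_mul, ENNReal.ofReal_mul (abs_nonneg _)]
        exact mul_le_mul' hx.1 hx.2
    _ ≤ ENNReal.ofReal s + ENNReal.ofReal t :=
        (measure_union_le _ _).trans (add_le_add distribFn_rearr_le distribFn_rearr_le)

lemma ae_exists_le_rearr {u : ℕ → ℝ} (hu : Filter.Tendsto u Filter.atTop (𝓝 0)) :
    ∀ᵐ x ∂μ, ∃ j, ENNReal.ofReal |f x| ≤ rearr μ f (u j) := by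
  have hlim : Filter.Tendsto (fun j => ENNReal.ofReal (u j)) Filter.atTop (𝓝 0) := by
    simpa using ENNReal.tendsto_ofReal hu
  rw [ae_iff, ← nonpos_iff_eq_zero]
  refine ge_of_tendsto' hlim fun j => (measure_mono fun x hx => ?_).trans
    (distribFn_rearr_le (μ := μ) (f := f))
  simpa using not_exists.1 hx j

end Rearrangement

section MaximalRearrangement

variable {α : Type*} [MeasurableSpace α] {μ : Measure α} {f : α → ℝ} {t : ℝ} {E : Set α}

/-- The maximal rearrangement `f**(t) = t⁻¹ sup {∫_E |f| : μ E ≤ t}`. On nonatomic spaces this is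
the average of `f*` over `(0, t)`; the supremum is what bounds integrals over superlevel sets. -/
noncomputable def maximalRearr (μ : Measure α) (f : α → ℝ) (t : ℝ) : ℝ≥0∞ :=
  (⨆ (E : Set α) (_ : MeasurableSet E) (_ : μ E ≤ ENNReal.ofReal t),
    ∫⁻ x in E, ENNReal.ofReal |f x| ∂μ) / ENNReal.ofReal t

lemma measurable_maximalRearr : Measurable (maximalRearr μ f) := by
  refine Measurable.div (Monotone.measurable fun s t hst => ?_) ENNReal.measurable_ofReal
  exact iSup₂_mono fun E _ => iSup_mono' fun hE =>
    ⟨hE.trans (ENNReal.ofReal_le_ofReal hst), le_rfl⟩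

lemma setLIntegral_le_maximalRearr (ht : 0 < t) (hE : MeasurableSet E)
    (hμE : μ E ≤ ENNReal.ofReal t) :
    ∫⁻ x in E, ENNReal.ofReal |f x| ∂μ ≤ ENNReal.ofReal t * maximalRearr μ f t := by
  rw [maximalRearr, ENNReal.mul_div_cancel (by simpa using ht) ENNReal.ofReal_ne_top]
  exact le_iSup₂_of_le E hE (le_iSup_of_le hμE le_rfl)

-- Sort the points of `E` by the first `j` with `|f x| ≤ f*(t/2ʲ)`; all but the first of the
-- resulting pieces lie in a superlevel set `{|f| > f*(t/2^(j-1))}`.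
lemma setLIntegral_le_tsum_rearr (hf : Measurable f) (ht : 0 < t) (hE : MeasurableSet E)
    (hμE : μ E ≤ ENNReal.ofReal t) :
    ∫⁻ x in E, ENNReal.ofReal |f x| ∂μ ≤
      ∑' j : ℕ, ENNReal.ofReal (2 * t / 2 ^ j) * rearr μ f (t / 2 ^ j) := by
  let B : ℕ → Set α := fun j => {x | rearr μ f (t / 2 ^ j) < ENNReal.ofReal |f x|}
  have hB (j : ℕ) : MeasurableSet (B j) := measurableSet_lt measurable_const (by fun_prop)
  let S : ℕ → Set α := fun j => j.casesOn E B
  have hS (j : ℕ) : MeasurableSet (S j) := by cases j <;> simp [S, hE, hB]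
  have hμS (j : ℕ) : μ (S j) ≤ ENNReal.ofReal (2 * t / 2 ^ j) := by
    cases j with
    | zero => exact hμE.trans (ENNReal.ofReal_le_ofReal (by rw [pow_zero]; linarith))
    | succ j =>
      rw [pow_succ', mul_div_mul_left _ _ two_ne_zero]
      exact distribFn_rearr_le
  have hcover : E ≤ᵐ[μ] ⋃ j, S j \ B j := by
    have hlim : Filter.Tendsto (fun j : ℕ => t / 2 ^ j) Filter.atTop (𝓝 0) :=
      tendsto_const_nhds.div_atTop (tendsto_pow_atTop_atTop_of_one_lt one_lt_two)
    filter_upwards [ae_exists_le_rearr (μ := μ) (f := f) hlim] with x hx hxE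
    classical
    refine mem_iUnion.2 ⟨Nat.find hx, ?_, not_lt.2 (Nat.find_spec hx)⟩
    rcases hj : Nat.find hx with _ | j
    · exact hxE
    · exact not_le.1 (Nat.find_min hx (hj ▸ j.lt_succ_self))
  calc ∫⁻ x in E, ENNReal.ofReal |f x| ∂μ
      ≤ ∫⁻ x in ⋃ j, S j \ B j, ENNReal.ofReal |f x| ∂μ := lintegral_mono_set' hcover
    _ ≤ ∑' j, ∫⁻ x in S j \ B j, ENNReal.ofReal |f x| ∂μ := lintegral_iUnion_le _ _
    _ ≤ _ := ENNReal.tsum_le_tsum fun j => by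
        calc ∫⁻ x in S j \ B j, ENNReal.ofReal |f x| ∂μ
            ≤ ∫⁻ _ in S j \ B j, rearr μ f (t / 2 ^ j) ∂μ :=
              setLIntegral_mono' ((hS j).diff (hB j)) fun x hx => not_lt.1 hx.2
          _ ≤ ENNReal.ofReal (2 * t / 2 ^ j) * rearr μ f (t / 2 ^ j) := by
              rw [setLIntegral_const, mul_comm]
              gcongr
              exact (measure_mono sdiff_subset).trans (hμS j)

lemma maximalRearr_le_tsum_rearr (hf : Measurable f) (ht : 0 < t) :
    maximalRearr μ f t ≤ ∑' j : ℕ, ENNReal.ofReal (2 / 2 ^ j) * rearr μ f ((2 ^ j)⁻¹ * t) := by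
  refine ENNReal.div_le_of_le_mul (iSup₂_le fun E hE => iSup_le fun hμE => ?_)
  rw [← ENNReal.tsum_mul_right]
  refine (setLIntegral_le_tsum_rearr hf ht hE hμE).trans_eq (tsum_congr fun j => ?_)
  rw [mul_right_comm, ← ENNReal.ofReal_mul (by positivity)]
  congr 2 <;> ring

end MaximalRearrangement

section PowerNorm

/-- The measure `dt/t` on `(0, ∞)`, encoded as the image of Lebesgue measure under `exp`, so that
its invariance under dilations is the translation invariance of Lebesgue measure. -/
noncomputable def dilationMeasure : Measure ℝ := Measure.map Real.exp volume

lemma ae_dilationMeasure_of_forall_pos {P : ℝ → Prop} (h : ∀ t, 0 < t → P t) :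
    ∀ᵐ t ∂dilationMeasure, P t := by
  filter_upwards [ae_map_mem_range Real.exp (by simp [Real.range_exp, measurableSet_Ioi]) volume]
    with t ht
  exact h t (by simpa [Real.range_exp] using ht)

lemma lintegral_dilationMeasure {F : ℝ → ℝ≥0∞} (hF : Measurable F) :
    ∫⁻ t, F t ∂dilationMeasure = ∫⁻ t in Ioi (0 : ℝ), F t / ENNReal.ofReal t := by
  rw [dilationMeasure, lintegral_map hF Real.measurable_exp, ← Real.range_exp, ← image_univ,
    lintegral_image_eq_lintegral_abs_deriv_mul MeasurableSet.univ
      (fun x _ => (Real.hasDerivAt_exp x).hasDerivWithinAt) Real.exp_injective.injOn,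
    setLIntegral_univ]
  refine lintegral_congr fun x => ?_
  rw [Real.abs_exp, ENNReal.mul_div_cancel (by simpa using Real.exp_pos x) ENNReal.ofReal_ne_top]

lemma measurePreserving_mul_left_dilationMeasure {m : ℝ} (hm : 0 < m) :
    MeasurePreserving (m * ·) dilationMeasure dilationMeasure := by
  refine MeasurePreserving.of_semiconj (Real.measurable_exp.measurePreserving volume)
    (measurePreserving_add_left volume (Real.log m)) (fun x => ?_) (measurable_const_mul m)
  rw [Real.exp_add, Real.exp_log hm]

lemma eLpNorm_tsum_le {α ι : Type*} [MeasurableSpace α] {μ : Measure α} [Countable ι] {q : ℝ≥0∞}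
    (hq : 1 ≤ q) {F : ι → α → ℝ≥0∞} (hF : ∀ i, Measurable (F i)) :
    eLpNorm (fun x => ∑' i, F i x) q μ ≤ ∑' i, eLpNorm (F i) q μ := by
  rcases eq_or_ne q ∞ with rfl | hq_top
  · simp only [eLpNorm_exponent_top, eLpNormEssSup, enorm_eq_self]
    refine essSup_le_of_ae_le _ ?_
    filter_upwards [ae_all_iff.2 fun i => ENNReal.ae_le_essSup (μ := μ) (F i)] with x hx
    exact ENNReal.tsum_le_tsum hx
  have hq_zero : q ≠ 0 := (one_pos.trans_le hq).ne'
  have hq_pos : 0 < q.toReal := ENNReal.toReal_pos hq_zero hq_top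
  have hpow (G : α → ℝ≥0∞) : ∫⁻ x, G x ^ q.toReal ∂μ = eLpNorm G q μ ^ q.toReal := by
    simp only [eLpNorm_eq_lintegral_rpow_enorm_toReal hq_zero hq_top, enorm_eq_self, one_div,
      ENNReal.rpow_inv_rpow hq_pos.ne']
  rw [← ENNReal.rpow_le_rpow_iff hq_pos, ← hpow]
  calc ∫⁻ x, (∑' i, F i x) ^ q.toReal ∂μ
      = ∫⁻ x, ⨆ A : Finset ι, (∑ i ∈ A, F i) x ^ q.toReal ∂μ := by
        refine lintegral_congr fun x => ?_
        simp only [ENNReal.tsum_eq_iSup_sum, Finset.sum_apply]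
        exact (ENNReal.orderIsoRpow _ hq_pos).map_iSup _
    _ = ⨆ A : Finset ι, ∫⁻ x, (∑ i ∈ A, F i) x ^ q.toReal ∂μ :=
        lintegral_iSup_directed (fun A => by fun_prop) <| Monotone.directed_le fun A B hAB x => by
          simp only [Finset.sum_apply]
          gcongr
    _ ≤ (∑' i, eLpNorm (F i) q μ) ^ q.toReal := iSup_le fun A => by
        rw [hpow]
        gcongr
        exact (eLpNorm_sum_le (fun i _ => (hF i).aestronglyMeasurable) hq).trans
          (ENNReal.sum_le_tsum A)

/-- The norm of `t ↦ tᵃ F(t)` in `L^q((0, ∞), dt/t)`. -/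
noncomputable def powNorm (a : ℝ) (q : ℝ≥0∞) (F : ℝ → ℝ≥0∞) : ℝ≥0∞ :=
  eLpNorm (fun t => ENNReal.ofReal t ^ a * F t) q dilationMeasure

variable {a b : ℝ} {q : ℝ≥0∞} {F G : ℝ → ℝ≥0∞}

lemma powNorm_le_mul (hG : Measurable G) {C : ℝ≥0∞}
    (h : ∀ t, 0 < t → ENNReal.ofReal t ^ a * F t ≤ C * (ENNReal.ofReal t ^ b * G t)) :
    powNorm a q F ≤ C * powNorm b q G :=
  eLpNorm_le_mul_eLpNorm_of_ae_le_mul'' q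
    (by fun_prop : Measurable fun t => ENNReal.ofReal t ^ b * G t).aestronglyMeasurable
    (ae_dilationMeasure_of_forall_pos h)

lemma powNorm_comp_mul_left_le (hG : Measurable G) {m : ℝ} (hm : 0 < m) :
    powNorm a q (fun t => G (m * t)) ≤ ENNReal.ofReal m ^ (-a) * powNorm a q G := by
  have hm' : ENNReal.ofReal m ≠ 0 := by simpa using hm
  let H : ℝ → ℝ≥0∞ := fun t => ENNReal.ofReal t ^ a * G t
  have hH : AEStronglyMeasurable H dilationMeasure := by fun_prop
  rw [powNorm, powNorm, ← eLpNorm_comp_measurePreserving hH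
    (measurePreserving_mul_left_dilationMeasure hm)]
  refine eLpNorm_le_mul_eLpNorm_of_ae_le_mul'' q ?_
    (ae_dilationMeasure_of_forall_pos fun t _ => le_of_eq ?_)
  · exact (by fun_prop : Measurable (H ∘ (m * ·))).aestronglyMeasurable
  simp only [H, Function.comp_apply, enorm_eq_self]
  rw [ENNReal.ofReal_mul hm.le, ENNReal.mul_rpow_of_ne_top ENNReal.ofReal_ne_top
    ENNReal.ofReal_ne_top, mul_assoc, ← mul_assoc (_ ^ (-a)),
    ← ENNReal.rpow_add _ _ hm' ENNReal.ofReal_ne_top, neg_add_cancel, ENNReal.rpow_zero, one_mul]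

lemma powNorm_le_tsum_mul {ι : Type*} [Countable ι] (hq : 1 ≤ q) (hG : Measurable G)
    {c : ι → ℝ≥0∞} {m : ι → ℝ} (hm : ∀ i, 0 < m i)
    (h : ∀ t, 0 < t → F t ≤ ∑' i, c i * G (m i * t)) :
    powNorm a q F ≤ (∑' i, c i * ENNReal.ofReal (m i) ^ (-a)) * powNorm a q G := by
  calc powNorm a q F
      ≤ eLpNorm (fun t => ∑' i, ENNReal.ofReal t ^ a * (c i * G (m i * t))) q dilationMeasure :=
        eLpNorm_mono_enorm_ae <| ae_dilationMeasure_of_forall_pos fun t ht => by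
          simp only [enorm_eq_self, ENNReal.tsum_mul_left]
          gcongr
          exact h t ht
    _ ≤ ∑' i, powNorm a q fun t => c i * G (m i * t) :=
        eLpNorm_tsum_le hq fun i => by fun_prop
    _ ≤ ∑' i, c i * powNorm a q fun t => G (m i * t) :=
        ENNReal.tsum_le_tsum fun i => powNorm_le_mul (by fun_prop) fun t _ => by
          exact (mul_left_comm _ _ _).le
    _ ≤ ∑' i, c i * (ENNReal.ofReal (m i) ^ (-a) * powNorm a q G) := by
        gcongr with i
        exact powNorm_comp_mul_left_le hG (hm i)
    _ = _ := by simp only [← mul_assoc, ENNReal.tsum_mul_right]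

lemma tsum_mul_geometric_ne_top {c r : ℝ≥0∞} (hc : c ≠ ∞) (hr : r < 1) :
    ∑' j : ℕ, c * r ^ j ≠ ∞ := by
  rw [ENNReal.tsum_mul_left, ENNReal.tsum_geometric]
  exact ENNReal.mul_ne_top hc (ENNReal.inv_ne_top.2 (tsub_pos_of_lt hr).ne')

lemma ofReal_two_rpow_lt_one {x : ℝ} (hx : x < 0) : ENNReal.ofReal (2 ^ x) < 1 := by
  simpa using Real.rpow_lt_one_of_one_lt_of_neg one_lt_two hx

lemma le_tsum_of_le_add_two_mul {A h : ℝ → ℝ≥0∞} (hstep : ∀ t, 0 < t → h t ≤ h (2 * t) + A (2 * t))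
    (hzero : ∀ᶠ t in Filter.atTop, h t = 0) {t : ℝ} (ht : 0 < t) :
    h t ≤ ∑' k : ℕ, A (2 ^ (k + 1) * t) := by
  have hiter (N : ℕ) : h t ≤ h (2 ^ N * t) + ∑ k ∈ Finset.range N, A (2 ^ (k + 1) * t) := by
    induction N with
    | zero => simp
    | succ N ih =>
      rw [Finset.sum_range_succ_comm, ← add_assoc, pow_succ', mul_assoc]
      exact ih.trans (add_le_add_left (hstep _ (by positivity)) _)
  have hlim : Filter.Tendsto (fun N : ℕ => (2 : ℝ) ^ N * t) Filter.atTop Filter.atTop :=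
    (tendsto_pow_atTop_atTop_of_one_lt (one_lt_two (α := ℝ))).atTop_mul_const ht
  obtain ⟨N, hN⟩ := (hlim.eventually hzero).exists
  calc h t ≤ ∑ k ∈ Finset.range N, A (2 ^ (k + 1) * t) := by simpa [hN] using hiter N
    _ ≤ _ := ENNReal.sum_le_tsum _

lemma exists_powNorm_le_of_le_add_two_mul (ha : 0 < a) :
    ∃ C : ℝ≥0∞, C ≠ ∞ ∧ ∀ q, 1 ≤ q → ∀ A h : ℝ → ℝ≥0∞, Measurable A →
      (∀ t, 0 < t → h t ≤ h (2 * t) + A (2 * t)) → (∀ᶠ t in Filter.atTop, h t = 0) →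
      powNorm a q h ≤ C * powNorm a q A := by
  have hterm (k : ℕ) : ENNReal.ofReal (2 ^ (k + 1)) ^ (-a) =
      ENNReal.ofReal (2 ^ (-a)) * ENNReal.ofReal (2 ^ (-a)) ^ k := by
    rw [← pow_succ', ← ENNReal.ofReal_pow (by positivity),
      ENNReal.ofReal_rpow_of_pos (by positivity), ← Real.rpow_natCast_mul zero_le_two,
      Real.rpow_pow_comm zero_le_two, ← Real.rpow_natCast_mul zero_le_two]
  have hfin : ∑' k : ℕ, 1 * ENNReal.ofReal (2 ^ (k + 1)) ^ (-a) ≠ ∞ := by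
    simp only [one_mul, hterm]
    exact tsum_mul_geometric_ne_top ENNReal.ofReal_ne_top (ofReal_two_rpow_lt_one (by linarith))
  refine ⟨_, hfin, fun q hq A h hA hstep hzero => ?_⟩
  refine powNorm_le_tsum_mul hq hA (fun _ => by positivity) fun t ht => ?_
  simpa only [one_mul] using le_tsum_of_le_add_two_mul hstep hzero ht

-- Hardy's inequality, as a countable sum of dilations.
lemma exists_powNorm_maximalRearr_le {α : Type*} [MeasurableSpace α] (μ : Measure α) (ha : a < 1) :
    ∃ C : ℝ≥0∞, C ≠ ∞ ∧ ∀ q, 1 ≤ q → ∀ f : α → ℝ, Measurable f →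
      powNorm a q (maximalRearr μ f) ≤ C * powNorm a q (rearr μ f) := by
  have hterm (j : ℕ) : ENNReal.ofReal (2 / 2 ^ j) * ENNReal.ofReal ((2 ^ j)⁻¹) ^ (-a) =
      ENNReal.ofReal 2 * ENNReal.ofReal (2 ^ (a - 1)) ^ j := by
    rw [ENNReal.ofReal_rpow_of_pos (by positivity), ← ENNReal.ofReal_pow (by positivity),
      ← ENNReal.ofReal_mul (by positivity), ← ENNReal.ofReal_mul zero_le_two,
      Real.rpow_sub_one two_ne_zero, Real.inv_rpow (by positivity), Real.rpow_neg (by positivity),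
      inv_inv, ← Real.rpow_pow_comm zero_le_two, div_pow, div_mul_eq_mul_div, mul_div_assoc]
  have hfin : ∑' j : ℕ, ENNReal.ofReal (2 / 2 ^ j) * ENNReal.ofReal ((2 ^ j)⁻¹) ^ (-a) ≠ ∞ := by
    simp only [hterm]
    exact tsum_mul_geometric_ne_top ENNReal.ofReal_ne_top (ofReal_two_rpow_lt_one (by linarith))
  exact ⟨_, hfin, fun q hq f hf => powNorm_le_tsum_mul hq rearr_antitone.measurable
    (fun _ => by positivity) fun t ht => maximalRearr_le_tsum_rearr hf ht⟩

end PowerNorm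

section Lorentz

variable {α : Type*} [MeasurableSpace α] {μ : Measure α} {f g : α → ℝ} {p p₁ p₂ q : ℝ≥0∞}

lemma rpow_mul_rearr_le_lorentz_top {t : ℝ} (ht : 0 < t) :
    ENNReal.ofReal t ^ p.toReal⁻¹ * rearr μ f t ≤ lorentz μ p ∞ f := by
  rw [lorentz, if_pos rfl]
  exact le_iSup₂_of_le t ht le_rfl

lemma rpow_mul_le_powNorm_top {F : ℝ → ℝ≥0∞} (hF : Antitone F) {a t : ℝ} (ht : 0 < t) :
    ENNReal.ofReal t ^ a * F t ≤ powNorm a ∞ F := by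
  have hae : ∀ᵐ x : ℝ, ENNReal.ofReal (Real.exp x) ^ a * F (Real.exp x) ≤ powNorm a ∞ F := by
    rw [powNorm, eLpNorm_exponent_top]
    exact ae_of_ae_map Real.measurable_exp.aemeasurable ae_le_eLpNormEssSup
  obtain ⟨y, rfl⟩ : ∃ y, Real.exp y = t := ⟨_, Real.exp_log ht⟩
  have hlim : Filter.Tendsto (fun x => ENNReal.ofReal (Real.exp x) ^ a * F (Real.exp y)) (𝓝[<] y)
      (𝓝 (ENNReal.ofReal (Real.exp y) ^ a * F (Real.exp y))) := by
    refine ENNReal.Tendsto.mul_const (Continuous.tendsto' ?_ _ _ rfl |>.mono_left inf_le_left)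
      (.inl (ENNReal.rpow_pos (by simpa using ht) ENNReal.ofReal_ne_top).ne')
    exact ENNReal.continuous_rpow_const.comp (ENNReal.continuous_ofReal.comp Real.continuous_exp)
  refine le_of_tendsto_of_frequently hlim ((nhdsLT_basis y).frequently_iff.2 fun r hr => ?_)
  obtain ⟨x, hx, hrx, hxy⟩ := (Measure.dense_of_ae hae).exists_between hr
  refine ⟨x, ⟨hrx, hxy⟩, le_trans ?_ hx⟩
  gcongr
  exact hF (Real.exp_le_exp.2 hxy.le)

lemma lorentz_eq_powNorm (hq : q ≠ 0) :
    lorentz μ p q f = powNorm p.toReal⁻¹ q (rearr μ f) := by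
  rcases eq_or_ne q ∞ with rfl | hq_top
  · refine le_antisymm ?_ (essSup_le_of_ae_le _ ?_)
    · rw [lorentz, if_pos rfl]
      exact iSup₂_le fun t ht => rpow_mul_le_powNorm_top rearr_antitone ht
    · exact ae_dilationMeasure_of_forall_pos fun t ht => rpow_mul_rearr_le_lorentz_top ht
  · have hmeas : Measurable (rearr μ f) := rearr_antitone.measurable
    rw [lorentz, if_neg hq_top, powNorm, eLpNorm_eq_lintegral_rpow_enorm_toReal hq hq_top, one_div]
    simp only [enorm_eq_self]
    rw [lintegral_dilationMeasure (by fun_prop)]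

lemma lorentz_mul_le (hq : q ≠ 0) (hp : p.toReal⁻¹ = p₁.toReal⁻¹ + p₂.toReal⁻¹) :
    lorentz μ p q (fun x => f x * g x) ≤
      2 ^ p.toReal⁻¹ * lorentz μ p₁ ∞ f * lorentz μ p₂ q g := by
  rw [lorentz_eq_powNorm hq, lorentz_eq_powNorm hq]
  have h2 : (2 : ℝ≥0∞) ≠ 0 := two_ne_zero
  have h2' : (2 : ℝ≥0∞) ≠ ∞ := ENNReal.ofNat_ne_top
  have hmeas : Measurable (rearr μ g) := rearr_antitone.measurable
  have hhalf (t : ℝ) : ENNReal.ofReal t = 2 * ENNReal.ofReal (2⁻¹ * t) := by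
    rw [← ENNReal.ofReal_ofNat, ← ENNReal.ofReal_mul zero_le_two, mul_inv_cancel_left₀ two_ne_zero]
  calc powNorm p.toReal⁻¹ q (rearr μ fun x => f x * g x)
      ≤ 2 ^ p₁.toReal⁻¹ * lorentz μ p₁ ∞ f *
          powNorm p₂.toReal⁻¹ q (fun t => rearr μ g (2⁻¹ * t)) :=
        powNorm_le_mul (by fun_prop) fun t ht => by
          have hs : 0 < 2⁻¹ * t := by positivity
          calc ENNReal.ofReal t ^ p.toReal⁻¹ * rearr μ (fun x => f x * g x) t
              ≤ ENNReal.ofReal t ^ p.toReal⁻¹ *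
                  (rearr μ f (2⁻¹ * t) * rearr μ g (2⁻¹ * t)) := by
                gcongr
                simpa [← add_mul, ← two_mul] using
                  rearr_mul_le (μ := μ) (f := f) (g := g) hs.le hs.le
            _ = 2 ^ p₁.toReal⁻¹ * (ENNReal.ofReal (2⁻¹ * t) ^ p₁.toReal⁻¹ * rearr μ f (2⁻¹ * t)) *
                  (ENNReal.ofReal t ^ p₂.toReal⁻¹ * rearr μ g (2⁻¹ * t)) := by
                rw [hp, ENNReal.rpow_add _ _ (by simpa using ht) ENNReal.ofReal_ne_top,
                  ← mul_assoc (2 ^ _), ← ENNReal.mul_rpow_of_nonneg _ _ (by positivity), ← hhalf]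
                ring
            _ ≤ _ := by
                gcongr
                exact rpow_mul_rearr_le_lorentz_top hs
    _ ≤ 2 ^ p₁.toReal⁻¹ * lorentz μ p₁ ∞ f *
          (ENNReal.ofReal 2⁻¹ ^ (-p₂.toReal⁻¹) * powNorm p₂.toReal⁻¹ q (rearr μ g)) := by
        gcongr
        exact powNorm_comp_mul_left_le hmeas (by positivity)
    _ = _ := by
        rw [hp, ENNReal.rpow_add _ _ h2 h2', ENNReal.ofReal_inv_of_pos two_pos,
          ENNReal.ofReal_ofNat, ENNReal.inv_rpow, ENNReal.rpow_neg, inv_inv]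
        ring

end Lorentz

section Truncation

lemma exists_contDiff_truncation {a b : ℝ} (ha : 0 ≤ a) (hab : a < b) :
    ∃ φ : ℝ → ℝ, ContDiff ℝ 1 φ ∧ φ 0 = 0 ∧ (∀ y, |deriv φ y| ≤ 1) ∧
      (∀ y, |y| ≤ a → deriv φ y = 0) ∧ ∀ y, b ≤ |y| → (b - a) / 2 ≤ |φ y| := by
  set m := (a + b) / 2 with hm
  obtain ⟨θ, hθ_zero, hθ_one, hθ_mem⟩ := exists_continuous_zero_one_of_isClosed
    (isClosed_le continuous_abs continuous_const : IsClosed {y : ℝ | |y| ≤ a})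
    (isClosed_le continuous_const continuous_abs : IsClosed {y : ℝ | m ≤ |y|})
    (disjoint_left.2 fun y (hy : |y| ≤ a) (hy' : m ≤ |y|) => by linarith)
  let φ : ℝ → ℝ := fun y => ∫ s in (0 : ℝ)..y, θ s
  have hint (x y : ℝ) : IntervalIntegrable θ volume x y := θ.continuous.intervalIntegrable x y
  have hderiv (y : ℝ) : HasDerivAt φ (θ y) y := θ.continuous.integral_hasStrictDerivAt 0 y
    |>.hasDerivAt
  have hsplit (x y : ℝ) : φ y = φ x + ∫ s in x..y, θ s :=
    (intervalIntegral.integral_add_adjacent_intervals (hint 0 x) (hint x y)).symm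
  have hmono : Monotone φ := monotone_of_hasDerivAt_nonneg hderiv fun y => (hθ_mem y).1
  have hφ_zero : φ 0 = 0 := intervalIntegral.integral_same
  have hslope {x y : ℝ} (h : ∀ s ∈ uIcc x y, m ≤ |s|) : ∫ s in x..y, θ s = y - x := by
    rw [intervalIntegral.integral_congr fun s hs => hθ_one (h s hs)]
    simp
  refine ⟨φ, contDiff_one_iff_deriv.2 ⟨fun y => (hderiv y).differentiableAt, ?_⟩, hφ_zero,
    fun y => ?_, fun y hy => (hderiv y).deriv.trans (hθ_zero hy), fun y hy => ?_⟩
  · exact θ.continuous.congr fun y => (hderiv y).deriv.symm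
  · rw [(hderiv y).deriv, abs_of_nonneg (hθ_mem y).1]
    exact (hθ_mem y).2
  rcases le_abs'.1 hy with hy | hy
  · have h1 := hsplit (-m) y
    have h2 := hmono (by linarith : -m ≤ 0)
    rw [hslope fun s hs => ?_] at h1
    · linarith [neg_le_abs (φ y)]
    · rw [uIcc_of_ge (by linarith)] at hs
      exact le_abs.2 (.inr (by linarith [hs.2]))
  · have h1 := hsplit m y
    have h2 := hmono (by linarith : 0 ≤ m)
    rw [hslope fun s hs => ?_] at h1
    · linarith [le_abs_self (φ y)]
    · rw [uIcc_of_le (by linarith)] at hs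
      exact le_abs.2 (.inl hs.1)

end Truncation

section Sobolev

open Module

lemma le_mul_rpow_of_mul_rpow_one_sub_le {x c t : ℝ≥0∞} {e : ℝ} (ht : t ≠ 0) (ht_top : t ≠ ∞)
    (h : x * t ^ (1 - e) ≤ c * t) : x ≤ c * t ^ e := by
  rw [← ENNReal.mul_le_mul_iff_left (ENNReal.rpow_pos ht.bot_lt ht_top).ne'
    (ENNReal.rpow_ne_top_of_ne_zero ht ht_top), mul_assoc, ← ENNReal.rpow_add _ _ ht ht_top,
    add_sub_cancel, ENNReal.rpow_one]
  exact h

variable {E : Type*} [NormedAddCommGroup E] [NormedSpace ℝ E]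

lemma enorm_fderiv_comp {φ : ℝ → ℝ} {f : E → ℝ} {x : E} (hφ : DifferentiableAt ℝ φ (f x))
    (hf : DifferentiableAt ℝ f x) :
    ‖fderiv ℝ (φ ∘ f) x‖ₑ = ‖deriv φ (f x)‖ₑ * ENNReal.ofReal |‖fderiv ℝ f x‖| := by
  rw [(hφ.hasDerivAt.comp_hasFDerivAt x hf.hasFDerivAt).fderiv, enorm_smul, abs_norm, ofReal_norm]

variable [FiniteDimensional ℝ E] [MeasurableSpace E] [BorelSpace E] (μ : Measure E)
  [μ.IsAddHaarMeasure]

lemma exists_mul_measure_rpow_le_lintegral_fderiv (hE : 1 < finrank ℝ E) :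
    ∃ C : ℝ≥0∞, C ≠ ∞ ∧ ∀ u : E → ℝ, ContDiff ℝ 1 u → HasCompactSupport u → ∀ c : ℝ≥0∞,
      c * μ {x | c ≤ ‖u x‖ₑ} ^ (1 - (finrank ℝ E : ℝ)⁻¹) ≤ C * ∫⁻ x, ‖fderiv ℝ u x‖ₑ ∂μ := by
  obtain ⟨r, hr⟩ : ∃ r : ℝ≥0, NNReal.HolderConjugate (finrank ℝ E) r :=
    ⟨_, .conjExponent (by exact_mod_cast hE)⟩
  have hr_pos : 0 < (r : ℝ≥0∞).toReal := by simpa using hr.symm.pos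
  have hr_inv : 1 - (finrank ℝ E : ℝ)⁻¹ = (r : ℝ≥0∞).toReal⁻¹ := by
    simpa using hr.coe.one_sub_inv
  refine ⟨eLpNormLESNormFDerivOneConst μ r, ENNReal.coe_ne_top, fun u hu hu_supp c => ?_⟩
  rw [hr_inv, ← ENNReal.rpow_le_rpow_iff hr_pos, ENNReal.mul_rpow_of_nonneg _ _ hr_pos.le,
    ENNReal.rpow_inv_rpow hr_pos.ne']
  calc c ^ (r : ℝ≥0∞).toReal * μ {x | c ≤ ‖u x‖ₑ}
      ≤ eLpNorm u r μ ^ (r : ℝ≥0∞).toReal :=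
        mul_meas_ge_le_pow_eLpNorm' μ (by simpa using hr.symm.pos.ne') ENNReal.coe_ne_top
          hu.continuous.aestronglyMeasurable c
    _ ≤ _ := by
        rw [← eLpNorm_one_eq_lintegral_enorm]
        gcongr
        exact eLpNorm_le_eLpNorm_fderiv_one μ hu hu_supp hr

-- Apply the weak type Sobolev inequality to a truncation of `f` at heights `a` and `b`.
lemma exists_sub_mul_distribFn_rpow_le (hE : 1 < finrank ℝ E) :
    ∃ C : ℝ≥0∞, C ≠ ∞ ∧ ∀ f : E → ℝ, ContDiff ℝ 1 f → HasCompactSupport f → ∀ a b : ℝ≥0, a < b →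
      (b - a) * distribFn μ f b ^ (1 - (finrank ℝ E : ℝ)⁻¹) ≤
        C * ∫⁻ x in {x | a < ENNReal.ofReal |f x|}, ENNReal.ofReal |‖fderiv ℝ f x‖| ∂μ := by
  obtain ⟨C, hC, hsob⟩ := exists_mul_measure_rpow_le_lintegral_fderiv μ hE
  refine ⟨2 * C, by finiteness, fun f hf hf_supp a b hab => ?_⟩
  obtain ⟨φ, hφ, hφ_zero, hφ_le, hφ_deriv, hφ_ge⟩ := exists_contDiff_truncation a.2 hab
  have hmeas : MeasurableSet {x | a < ENNReal.ofReal |f x|} :=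
    measurableSet_lt measurable_const (by have := hf.continuous.measurable; fun_prop)
  have hfderiv : ∫⁻ x, ‖fderiv ℝ (φ ∘ f) x‖ₑ ∂μ ≤
      ∫⁻ x in {x | a < ENNReal.ofReal |f x|}, ENNReal.ofReal |‖fderiv ℝ f x‖| ∂μ := by
    rw [← lintegral_indicator hmeas]
    refine lintegral_mono fun x => ?_
    have h := enorm_fderiv_comp (hφ.differentiable one_ne_zero (f x))
      (hf.differentiable one_ne_zero x)
    rw [indicator_apply]
    split_ifs with hx
    · rw [h, Real.enorm_eq_ofReal_abs]
      exact mul_le_of_le_one_left' (ENNReal.ofReal_le_one.2 (hφ_le _))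
    · rw [mem_ofPred_eq, not_lt, ENNReal.ofReal_le_coe] at hx
      simpa [hφ_deriv (f x) hx] using h
  set d : ℝ≥0∞ := ENNReal.ofReal ((b - a) / 2) with hd
  have hsub : distribFn μ f b ≤ μ {x | d ≤ ‖(φ ∘ f) x‖ₑ} := measure_mono fun x hx => by
    rw [mem_ofPred_eq, Real.enorm_eq_ofReal_abs]
    exact ENNReal.ofReal_le_ofReal (hφ_ge _ (ENNReal.coe_lt_ofReal.1 hx).le)
  calc (b - a) * distribFn μ f b ^ (1 - (finrank ℝ E : ℝ)⁻¹)
      ≤ 2 * (d * μ {x | d ≤ ‖(φ ∘ f) x‖ₑ} ^ (1 - (finrank ℝ E : ℝ)⁻¹)) := by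
        have hd_two : (b - a : ℝ≥0∞) = 2 * d := by
          rw [hd, ← ENNReal.ofReal_ofNat, ← ENNReal.ofReal_mul zero_le_two,
            mul_div_cancel₀ _ two_ne_zero, ENNReal.ofReal_sub _ a.coe_nonneg]
          simp
        have hexp : 0 ≤ 1 - (finrank ℝ E : ℝ)⁻¹ := sub_nonneg.2 (Nat.cast_inv_le_one _)
        rw [hd_two, mul_assoc]
        gcongr
    _ ≤ 2 * (C * ∫⁻ x, ‖fderiv ℝ (φ ∘ f) x‖ₑ ∂μ) := by
        gcongr 2 * ?_
        exact hsob _ (hφ.comp hf) (hf_supp.comp_left hφ_zero) _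
    _ ≤ _ := by
        rw [mul_assoc]
        gcongr

lemma exists_rearr_le_add_maximalRearr (hE : 1 < finrank ℝ E) :
    ∃ C : ℝ≥0∞, C ≠ ∞ ∧ ∀ f : E → ℝ, ContDiff ℝ 1 f → HasCompactSupport f → ∀ t, 0 < t →
      rearr μ f t ≤ rearr μ f (2 * t) +
        C * (ENNReal.ofReal (2 * t) ^ (finrank ℝ E : ℝ)⁻¹ *
          maximalRearr μ (fun x => ‖fderiv ℝ f x‖) (2 * t)) := by
  obtain ⟨C, hC, hlevel⟩ := exists_sub_mul_distribFn_rpow_le μ hE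
  refine ⟨2 * C, by finiteness, fun f hf hf_supp t ht => ?_⟩
  set M := maximalRearr μ (fun x => ‖fderiv ℝ f x‖) (2 * t)
  set e : ℝ := (finrank ℝ E : ℝ)⁻¹
  have he : 0 ≤ 1 - e := sub_nonneg.2 (Nat.cast_inv_le_one _)
  refine ENNReal.le_of_forall_nnreal_lt fun b hb => ?_
  rcases le_or_gt (b : ℝ≥0∞) (rearr μ f (2 * t)) with hab | hab
  · exact hab.trans le_self_add
  lift rearr μ f (2 * t) to ℝ≥0 using hab.ne_top with a ha
  have hmeas : MeasurableSet {x | a < ENNReal.ofReal |f x|} :=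
    measurableSet_lt measurable_const (by have := hf.continuous.measurable; fun_prop)
  have hmul : (b - a) * ENNReal.ofReal t ^ (1 - e) ≤ 2 * C * M * ENNReal.ofReal t :=
    calc (b - a) * ENNReal.ofReal t ^ (1 - e)
        ≤ (b - a) * distribFn μ f b ^ (1 - e) := by
          gcongr
          exact (lt_rearr_iff.1 hb).le
      _ ≤ C * ∫⁻ x in {x | a < ENNReal.ofReal |f x|}, ENNReal.ofReal |‖fderiv ℝ f x‖| ∂μ :=
          hlevel f hf hf_supp a b (by exact_mod_cast hab)
      _ ≤ C * (ENNReal.ofReal (2 * t) * M) := by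
          gcongr
          exact setLIntegral_le_maximalRearr (by positivity) hmeas (ha ▸ distribFn_rearr_le)
      _ = 2 * C * M * ENNReal.ofReal t := by
          rw [ENNReal.ofReal_mul zero_le_two, ENNReal.ofReal_ofNat]
          ring
  refine tsub_le_iff_left.1 ((le_mul_rpow_of_mul_rpow_one_sub_le (by simpa using ht)
    ENNReal.ofReal_ne_top hmul).trans ?_)
  rw [mul_assoc, mul_comm M]
  gcongr
  linarith

lemma exists_lorentz_le_lorentz_fderiv {p r : ℝ} (hp : 1 < p) (hpE : p < finrank ℝ E)
    (hr : r⁻¹ = p⁻¹ - (finrank ℝ E : ℝ)⁻¹) :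
    ∃ C : ℝ≥0∞, C ≠ ∞ ∧ ∀ q, 1 ≤ q → ∀ f : E → ℝ, ContDiff ℝ 1 f → HasCompactSupport f →
      lorentz μ (ENNReal.ofReal r) q f ≤
        C * lorentz μ (ENNReal.ofReal p) q (fun x => ‖fderiv ℝ f x‖) := by
  have hr_inv : 0 < r⁻¹ := hr ▸ sub_pos.2 (inv_strictAnti₀ (by linarith) hpE)
  obtain ⟨C₁, hC₁, hstep⟩ :=
    exists_rearr_le_add_maximalRearr μ (by exact_mod_cast hp.trans hpE : 1 < finrank ℝ E)
  obtain ⟨C₂, hC₂, hiter⟩ := exists_powNorm_le_of_le_add_two_mul hr_inv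
  obtain ⟨C₃, hC₃, hhardy⟩ := exists_powNorm_maximalRearr_le μ (inv_lt_one_of_one_lt₀ hp)
  refine ⟨C₂ * (C₁ * C₃), by finiteness, fun q hq f hf hf_supp => ?_⟩
  have hq_zero : q ≠ 0 := (one_pos.trans_le hq).ne'
  rw [lorentz_eq_powNorm hq_zero, lorentz_eq_powNorm hq_zero,
    ENNReal.toReal_ofReal (by linarith : 0 ≤ p), ENNReal.toReal_ofReal (inv_pos.1 hr_inv).le]
  set g : E → ℝ := fun x => ‖fderiv ℝ f x‖
  have hg_meas : Measurable g := (hf.continuous_fderiv one_ne_zero).norm.measurable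
  have hmax : Measurable (maximalRearr μ g) := measurable_maximalRearr
  calc powNorm r⁻¹ q (rearr μ f)
      ≤ C₂ * powNorm r⁻¹ q fun t =>
          C₁ * (ENNReal.ofReal t ^ (finrank ℝ E : ℝ)⁻¹ * maximalRearr μ g t) :=
        hiter q hq _ _ (by fun_prop) (hstep f hf hf_supp)
          (eventually_rearr_eq_zero_of_hasCompactSupport hf_supp)
    _ ≤ C₂ * (C₁ * powNorm p⁻¹ q (maximalRearr μ g)) := by
        gcongr
        refine powNorm_le_mul hmax fun t ht => le_of_eq ?_
        rw [← sub_add_cancel p⁻¹ (finrank ℝ E : ℝ)⁻¹, ← hr,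
          ENNReal.rpow_add _ _ (by simpa using ht) ENNReal.ofReal_ne_top]
        ring
    _ ≤ C₂ * (C₁ * (C₃ * powNorm p⁻¹ q (rearr μ g))) := by
        gcongr
        exact hhardy q hq g hg_meas
    _ = C₂ * (C₁ * C₃) * powNorm p⁻¹ q (rearr μ g) := by ring

end Sobolev

section Weight

open Module

variable {E : Type*} [NormedAddCommGroup E] [NormedSpace ℝ E] [FiniteDimensional ℝ E]
  [MeasurableSpace E] [BorelSpace E] (μ : Measure E) [μ.IsAddHaarMeasure]

lemma rearr_norm_rpow_neg_le [Nontrivial E] {s t : ℝ} (hs : 0 ≤ s) (ht : 0 < t) :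
    rearr μ (fun x => ‖x‖ ^ (-s)) t ≤
      ENNReal.ofReal (μ.real (Metric.ball 0 1) ^ (s / finrank ℝ E)) *
        ENNReal.ofReal t ^ (-(s / finrank ℝ E)) := by
  set n : ℝ := (finrank ℝ E : ℝ) with hn
  have hn0 : n ≠ 0 := by simpa [hn] using (finrank_pos (R := ℝ) (M := E)).ne'
  set w := μ.real (Metric.ball 0 1) with hw
  have hw0 : 0 < w :=
    ENNReal.toReal_pos (Metric.measure_ball_pos _ _ one_pos).ne' measure_ball_lt_top.ne
  set r : ℝ := (t / w) ^ n⁻¹ with hr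
  have hr0 : 0 < r := by positivity
  have hr_pow : r ^ finrank ℝ E = t / w := by
    rw [hr, ← Real.rpow_natCast, ← hn, Real.rpow_inv_rpow (by positivity) hn0]
  have hrs : ENNReal.ofReal (w ^ (s / n)) * ENNReal.ofReal t ^ (-(s / n)) =
      ENNReal.ofReal (r ^ (-s)) := by
    rw [ENNReal.ofReal_rpow_of_pos ht, ← ENNReal.ofReal_mul (by positivity), hr,
      ← Real.rpow_mul (by positivity), Real.div_rpow ht.le hw0.le, inv_mul_eq_div, neg_div,
      Real.rpow_neg hw0.le, div_inv_eq_mul, mul_comm]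
  rw [hrs, rearr_le_iff]
  calc distribFn μ (fun x => ‖x‖ ^ (-s)) (ENNReal.ofReal (r ^ (-s)))
      ≤ μ (Metric.ball 0 r) := measure_mono fun x hx => by
        contrapose! hx
        have hxr : r ≤ ‖x‖ := by simpa using hx
        rw [mem_ofPred_eq, not_lt, abs_of_nonneg (by positivity)]
        exact ENNReal.ofReal_le_ofReal (Real.rpow_le_rpow_of_nonpos hr0 hxr (by linarith))
    _ = ENNReal.ofReal t := by
        rw [Measure.addHaar_ball _ _ hr0.le, hr_pow, ← ofReal_measureReal, ← hw,
          ← ENNReal.ofReal_mul (by positivity), div_mul_cancel₀ _ hw0.ne']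

lemma lorentz_top_norm_rpow_neg_le [Nontrivial E] {s : ℝ} (hs : 0 ≤ s) :
    lorentz μ (finrank ℝ E / ENNReal.ofReal s) ∞ (fun x => ‖x‖ ^ (-s)) ≤
      ENNReal.ofReal (μ.real (Metric.ball 0 1) ^ (s / finrank ℝ E)) := by
  rw [lorentz, if_pos rfl, ENNReal.toReal_div, ENNReal.toReal_ofReal hs, ENNReal.toReal_natCast,
    inv_div]
  refine iSup₂_le fun t ht => (mul_le_mul_right (rearr_norm_rpow_neg_le μ hs ht) _).trans_eq ?_
  rw [mul_left_comm, ← ENNReal.rpow_add _ _ (by simpa using ht) ENNReal.ofReal_ne_top,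
    add_neg_cancel, ENNReal.rpow_zero, mul_one]

lemma lorentz_norm_rpow_neg_mul_le [Nontrivial E] {s : ℝ} {p r q : ℝ≥0∞} {f : E → ℝ} (hs : 0 ≤ s)
    (hq : q ≠ 0) (hp : p.toReal⁻¹ = s / finrank ℝ E + r.toReal⁻¹) :
    lorentz μ p q (fun x => ‖x‖ ^ (-s) * f x) ≤
      2 ^ p.toReal⁻¹ * ENNReal.ofReal (μ.real (Metric.ball 0 1) ^ (s / finrank ℝ E)) *
        lorentz μ r q f := by
  have hexp : p.toReal⁻¹ = (finrank ℝ E / ENNReal.ofReal s).toReal⁻¹ + r.toReal⁻¹ := by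
    rw [ENNReal.toReal_div, ENNReal.toReal_natCast, ENNReal.toReal_ofReal hs, inv_div, hp]
  refine (lorentz_mul_le hq hexp).trans ?_
  gcongr
  exact lorentz_top_norm_rpow_neg_le μ hs

theorem stmt_12_general {p l : ℝ} (hp : 1 < p) (hpE : p < finrank ℝ E) (hl : 0 ≤ l)
    (hlE : l < finrank ℝ E) :
    ∃ C : ℝ, 0 < C ∧ ∀ q, 1 ≤ q → ∀ f : E → ℝ, ContDiff ℝ 1 f → HasCompactSupport f →
      lorentz μ (ENNReal.ofReal (p * (finrank ℝ E - l) / (finrank ℝ E - p))) q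
          (fun x => ‖x‖ ^ (-(l / (p * (finrank ℝ E - l) / (finrank ℝ E - p)))) * f x) ≤
        ENNReal.ofReal C * lorentz μ (ENNReal.ofReal p) q (fun x => ‖fderiv ℝ f x‖) := by
  set n : ℝ := (finrank ℝ E : ℝ)
  set P : ℝ := p * (n - l) / (n - p) with hP
  have : Nontrivial E := nontrivial_of_finrank_pos (R := ℝ) (by
    exact_mod_cast (by linarith : (0 : ℝ) < finrank ℝ E))
  have hnp : 0 < n - p := sub_pos.2 hpE
  have hnl : 0 < n - l := sub_pos.2 hlE
  have hn0 : 0 < n := by linarith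
  have hP0 : 0 < P := by positivity
  obtain ⟨C, hC, hsobolev⟩ := exists_lorentz_le_lorentz_fderiv μ hp hpE (inv_inv _)
  set r : ℝ := (p⁻¹ - n⁻¹)⁻¹ with hr
  have hr0 : 0 ≤ r := inv_nonneg.2 (sub_nonneg.2 (inv_anti₀ (by linarith) hpE.le))
  have hexp : (ENNReal.ofReal P).toReal⁻¹ = l / P / n + (ENNReal.ofReal r).toReal⁻¹ := by
    rw [ENNReal.toReal_ofReal hP0.le, ENNReal.toReal_ofReal hr0, hr, inv_inv, hP]
    field_simp
    ring
  let K : ℝ≥0∞ := 2 ^ (ENNReal.ofReal P).toReal⁻¹ *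
    ENNReal.ofReal (μ.real (Metric.ball 0 1) ^ (l / P / n)) * C
  have hK : K ≤ ENNReal.ofReal (K.toReal + 1) := by
    rw [ENNReal.le_ofReal_iff_toReal_le (by finiteness) (by positivity)]
    linarith
  refine ⟨K.toReal + 1, by positivity, fun q hq f hf hf_supp => ?_⟩
  refine (lorentz_norm_rpow_neg_mul_le μ (by positivity) (one_pos.trans_le hq).ne' hexp).trans ?_
  refine (mul_le_mul_right (hsobolev q hq f hf hf_supp) _).trans ?_
  rw [← mul_assoc]
  gcongr

end Weight

/-- Hardy–Sobolev inequality in Lorentz spaces on ℝⁿ: for `0 ≤ l ≤ p` and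
`p*(l) = p(n-l)/(n-p)`, `‖|x|^{-l/p*(l)} f‖_{p*(l),q} ≤ C ‖|∇f|‖_{p,q}`. -/
theorem stmt_12 (n : ℕ) (hn : 2 ≤ n) (p : ℝ) (hp1 : 1 < p) (hpn : p < n)
    (q : ℝ≥0∞) (hq : 1 ≤ q) (l : ℝ) (hl0 : 0 ≤ l) (hlp : l ≤ p) :
    ∃ C : ℝ, 0 < C ∧ ∀ f : EuclideanSpace ℝ (Fin n) → ℝ,
      ContDiff ℝ (⊤ : ℕ∞) f → HasCompactSupport f →
      lorentz volume (ENNReal.ofReal (p * ((n : ℝ) - l) / ((n : ℝ) - p))) q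
          (fun x => ‖x‖ ^ (-(l / (p * ((n : ℝ) - l) / ((n : ℝ) - p)))) * f x) ≤
        ENNReal.ofReal C *
          lorentz volume (ENNReal.ofReal p) q (fun x => ‖gradient f x‖) := by
  have hfin : Module.finrank ℝ (EuclideanSpace ℝ (Fin n)) = n := finrank_euclideanSpace_fin
  obtain ⟨C, hC, h⟩ := stmt_12_general (volume : Measure (EuclideanSpace ℝ (Fin n))) hp1
    (by rwa [hfin]) hl0 (by rw [hfin]; linarith)
  refine ⟨C, hC, fun f hf hf_supp => ?_⟩
  simpa [gradient, hfin] using h q hq f (hf.of_le (by exact_mod_cast le_top)) hf_supp
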